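/- Let q be a prime power and let ν, m₁, m₂, t be positive integers with m₁ ≥ m₂ ≥ t and 2ν ≥ 2m₁ + m₂ + 1. If ℱ₁ ⊆ 𝒫_{m₁} and ℱ₂ ⊆ 𝒫_{m₂} are cross t-intersecting families, then |ℱ₁|·|ℱ₂| ≤ N'(t;m₁;2ν)·N'(t;m₂;2ν). -/

import Mathlib

open Finset Module

noncomputable section

/-- Gaussian binomial coefficient `[n choose k]_q` as a rational number. -/
def gaussBinom (q n k : ℕ) : ℚ :=
  ∏ i ∈ Finset.range k, ((q : ℚ) ^ ((n : ℤ) - i) - 1) / ((q : ℚ) ^ ((k : ℤ) - i) - 1)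

/-- `N'(a; m; 2ν)`, the number of `m`-dim totally isotropic subspaces containing
a fixed `a`-dim one. -/
def Nprime (q a m ν : ℕ) : ℚ :=
  ∏ i ∈ Finset.Icc 1 (m - a), ((q : ℚ) ^ (2 * ((ν : ℤ) - m + i)) - 1) / ((q : ℚ) ^ (i : ℤ) - 1)

variable {K V : Type*} [Field K] [AddCommGroup V] [Module K V]

/-- A subspace is totally isotropic w.r.t. the bilinear form `f`. -/
def TotallyIsotropic (f : V →ₗ[K] V →ₗ[K] K) (W : Submodule K V) : Prop :=
  ∀ x ∈ W, ∀ y ∈ W, f x y = 0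

/-- `polar f m` = `𝒫_m`, the set of `m`-dimensional totally isotropic subspaces. -/
def polar (f : V →ₗ[K] V →ₗ[K] K) (m : ℕ) : Set (Submodule K V) :=
  {W | TotallyIsotropic f W ∧ finrank K W = m}

/-- `X` is a `t`-cover of the family `ℱ`. -/
def IsTCover (f : V →ₗ[K] V →ₗ[K] K) (t : ℕ) (ℱ : Set (Submodule K V))
    (X : Submodule K V) : Prop :=
  TotallyIsotropic f X ∧ ∀ F ∈ ℱ, t ≤ finrank K ↥(X ⊓ F)

/-- `τ_t(ℱ)`, the minimum dimension of a `t`-cover of `ℱ`. -/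
def tauCover (f : V →ₗ[K] V →ₗ[K] K) (t : ℕ) (ℱ : Set (Submodule K V)) : ℕ :=
  sInf {x | ∃ X, IsTCover f t ℱ X ∧ finrank K ↥X = x}

def C1 (f : V →ₗ[K] V →ₗ[K] K) (M T : Submodule K V) (m t : ℕ) : Set (Submodule K V) :=
  {F | F ∈ polar f m ∧ T ≤ F ∧ t + 1 ≤ finrank K ↥(F ⊓ M)}

def C2 (f : V →ₗ[K] V →ₗ[K] K) (M T : Submodule K V) (m : ℕ) : Set (Submodule K V) :=
  {F | F ∈ polar f m ∧ T ≤ F} ∪ {F | F ∈ polar f m ∧ F ≤ M}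

def C3 (f : V →ₗ[K] V →ₗ[K] K) (S : Submodule K V) (m : ℕ) : Set (Submodule K V) :=
  {F | F ∈ polar f m ∧ S ≤ F}

def C4 (f : V →ₗ[K] V →ₗ[K] K) (S : Submodule K V) (m t : ℕ) : Set (Submodule K V) :=
  {F | F ∈ polar f m ∧ t ≤ finrank K ↥(F ⊓ S)}

def s0 (q ν m s t : ℕ) : ℚ :=
  gaussBinom q (s - t) 1 * Nprime q (t + 1) m ν - q * gaussBinom q (s - t) 2 * Nprime q (t + 2) m ν

/-!
Let `τᵢ` be the least dimension of a `t`-cover of `ℱᵢ`. If `dim T < τ₂`, then `dim (T ⊓ G) < t` for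
some `G ∈ ℱ₂`, so every `F ∈ ℱ₁` above `T` meets `G` outside `T` and hence lies above some
`T ⊔ ⟨x⟩` with `x ∈ G`. Passing from `T` to the fullest such extension costs a factor of at most
`q ^ (m₂ - t + 1)`. Repeating this from dimension `t` up to dimension `τ₂`, we see that at most
`q ^ ((m₂ - t + 1) (τ₂ - t)) N'(τ₂; m₁; 2ν)` members of `ℱ₁` lie above a given `t`-dimensional
subspace, and this is at most `q ^ (-(t + 1) (τ₂ - t)) N'(t; m₁; 2ν)` because
`q ^ (m₂ + 2) N'(s + 1; m₁; 2ν) ≤ N'(s; m₁; 2ν)`. Every member of `ℱ₁` contains one of the at most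
`q ^ ((t + 1) (τ₁ - t))` subspaces of dimension `t` of a minimum `t`-cover of `ℱ₁`, whence
`q ^ ((t + 1) τ₂) |ℱ₁| ≤ q ^ ((t + 1) τ₁) N'(t; m₁; 2ν)`. In the product of this inequality with
its mirror image the powers of `q` cancel.
-/

section Nprime

variable {q a c m ν : ℕ}

lemma Nprime_nonneg (hq : 0 < q) (hm : m ≤ ν) : 0 ≤ Nprime q a m ν := by
  have one_le_q : (1 : ℚ) ≤ q := mod_cast hq
  refine prod_nonneg fun i _ ↦ div_nonneg ?_ ?_ <;>
    exact sub_nonneg.mpr (one_le_zpow₀ one_le_q (by lia))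

lemma Nprime_self : Nprime q m m ν = 1 := by simp [Nprime]

lemma Nprime_mul_pow_sub_one (hq : 1 < q) (ham : a < m) (haν : a ≤ ν) :
    Nprime q a m ν * ((q : ℚ) ^ (m - a) - 1) =
      Nprime q (a + 1) m ν * ((q : ℚ) ^ (2 * (ν - a)) - 1) := by
  obtain ⟨k, rfl⟩ : ∃ k, m = a + k + 1 := ⟨m - a - 1, by lia⟩
  obtain ⟨n, rfl⟩ := Nat.exists_eq_add_of_le haν
  have top_exponent : 2 * (((a + n : ℕ) : ℤ) - (a + k + 1 : ℕ) + (k + 1 : ℕ)) = (2 * n : ℕ) := by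
    push_cast
    ring
  have denominator_ne_zero : (q : ℚ) ^ (k + 1) - 1 ≠ 0 :=
    (sub_pos.mpr (one_lt_pow₀ (mod_cast hq) k.succ_ne_zero)).ne'
  rw [Nprime, Nprime, show a + k + 1 - a = k + 1 by lia, show a + k + 1 - (a + 1) = k by lia,
    Nat.add_sub_cancel_left, prod_Icc_succ_top (by lia), top_exponent, zpow_natCast, zpow_natCast]
  field_simp

lemma pow_mul_Nprime_succ_le (hq : 1 < q) (ham : a < m) (hmν : m ≤ ν) (hc : c + a + m ≤ 2 * ν) :
    (q : ℚ) ^ c * Nprime q (a + 1) m ν ≤ Nprime q a m ν := by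
  have one_lt_q : (1 : ℚ) < q := mod_cast hq
  have one_lt_pow : 1 < (q : ℚ) ^ (m - a) := one_lt_pow₀ one_lt_q (by lia)
  refine le_of_mul_le_mul_right ?_ (sub_pos.mpr one_lt_pow)
  calc (q : ℚ) ^ c * Nprime q (a + 1) m ν * ((q : ℚ) ^ (m - a) - 1)
      = Nprime q (a + 1) m ν * ((q : ℚ) ^ (c + (m - a)) - (q : ℚ) ^ c) := by ring
    _ ≤ Nprime q (a + 1) m ν * ((q : ℚ) ^ (2 * (ν - a)) - 1) := by
        refine mul_le_mul_of_nonneg_left (sub_le_sub ?_ ?_) (Nprime_nonneg (by lia) hmν)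
        · exact pow_le_pow_right₀ one_lt_q.le (by lia)
        · exact one_le_pow₀ one_lt_q.le
    _ = Nprime q a m ν * ((q : ℚ) ^ (m - a) - 1) :=
        (Nprime_mul_pow_sub_one hq ham (by lia)).symm

lemma antitoneOn_pow_mul_Nprime (hq : 1 < q) (hc : c + 2 * m ≤ 2 * ν + 1) :
    AntitoneOn (fun s ↦ (q : ℚ) ^ (c * s) * Nprime q s m ν) (Set.Iic m) := by
  refine antitoneOn_of_add_one_le Set.ordConnected_Iic fun s _ _ hs ↦ ?_
  have hsm : s + 1 ≤ m := hs
  calc (q : ℚ) ^ (c * (s + 1)) * Nprime q (s + 1) m ν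
      = (q : ℚ) ^ (c * s) * ((q : ℚ) ^ c * Nprime q (s + 1) m ν) := by ring
    _ ≤ (q : ℚ) ^ (c * s) * Nprime q s m ν := by
        gcongr
        exact pow_mul_Nprime_succ_le hq hsm (by lia) (by lia)

end Nprime

section FrameCount

variable {R : Type*} [CommRing R]

/-- The number of linearly independent `k`-tuples in an `n`-dimensional vector space over a field
with `x` elements, as a polynomial in `x`; `frameCount x n k / frameCount x k k` is the Gaussian
binomial coefficient. -/
def frameCount (x : R) (n k : ℕ) : R :=
  ∏ i ∈ range k, (x ^ n - x ^ i)

lemma frameCount_succ_mul (x : R) (n k : ℕ) :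
    frameCount x (n + 1) k * (x ^ (n + 1) - x ^ k) =
      (x ^ (n + 1) - 1) * x ^ k * frameCount x n k := by
  have shift : ∏ i ∈ range k, (x ^ (n + 1) - x ^ (i + 1)) = x ^ k * frameCount x n k := by
    simp_rw [frameCount, pow_succ', ← mul_sub, prod_mul_distrib, prod_const, card_range]
  rw [frameCount, ← prod_range_succ, prod_range_succ', shift, pow_zero]
  ring

variable [LinearOrder R] [IsStrictOrderedRing R] {x : R} {c k n s t : ℕ}

lemma frameCount_pos (hx : 1 < x) (hk : k ≤ n) : 0 < frameCount x n k :=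
  prod_pos fun _ hi ↦ sub_pos.mpr (pow_lt_pow_right₀ hx ((mem_range.mp hi).trans_le hk))

lemma pow_le_pow_mul_pow_sub_pow (hx : 2 ≤ x) (hst : s < t) (hn : n + 1 ≤ c + t) :
    x ^ n ≤ x ^ c * (x ^ t - x ^ s) := by
  have two_mul_pow_le {i j : ℕ} (hij : i + 1 ≤ j) : 2 * x ^ i ≤ x ^ j :=
    calc 2 * x ^ i ≤ x * x ^ i := by gcongr
      _ = x ^ (i + 1) := (pow_succ' x i).symm
      _ ≤ x ^ j := pow_le_pow_right₀ (by linarith) hij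
  have hn' : 2 * x ^ n ≤ x ^ (c + t) := two_mul_pow_le hn
  have hs' : 2 * x ^ (c + s) ≤ x ^ (c + t) := two_mul_pow_le (by lia)
  rw [mul_sub, ← pow_add, ← pow_add]
  linarith

lemma frameCount_succ_le (hx : 2 ≤ x) (hk : k ≤ n) :
    frameCount x (n + 1) k ≤ x ^ (k + 1) * frameCount x n k := by
  have one_lt_x : 1 < x := by linarith
  have frameCount_nonneg : 0 ≤ frameCount x n k := (frameCount_pos one_lt_x hk).le
  have pow_sub_one_le : x ^ (n + 1) - 1 ≤ x * (x ^ (n + 1) - x ^ k) := by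
    have := pow_le_pow_mul_pow_sub_pow (c := 1) hx (Nat.lt_succ_of_le hk) (by lia : n + 1 + 1 ≤ _)
    rw [pow_one, Nat.succ_eq_add_one] at this
    linarith
  refine le_of_mul_le_mul_right ?_ (sub_pos.mpr (pow_lt_pow_right₀ one_lt_x (Nat.lt_succ_of_le hk)))
  calc frameCount x (n + 1) k * (x ^ (n + 1) - x ^ k)
      = (x ^ (n + 1) - 1) * (x ^ k * frameCount x n k) := by rw [frameCount_succ_mul, mul_assoc]
    _ ≤ x * (x ^ (n + 1) - x ^ k) * (x ^ k * frameCount x n k) := by gcongr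
    _ = x ^ (k + 1) * frameCount x n k * (x ^ (n + 1) - x ^ k) := by ring

lemma pow_mul_frameCount_le (hx : 2 ≤ x) (hk : k ≤ n) :
    x ^ ((k + 1) * k) * frameCount x n k ≤ x ^ ((k + 1) * n) * frameCount x k k := by
  induction n, hk using Nat.le_induction with
  | base => rfl
  | succ n hk ih =>
    calc x ^ ((k + 1) * k) * frameCount x (n + 1) k
        ≤ x ^ ((k + 1) * k) * (x ^ (k + 1) * frameCount x n k) := by
          gcongr
          exact frameCount_succ_le hx hk
      _ = x ^ (k + 1) * (x ^ ((k + 1) * k) * frameCount x n k) := by ring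
      _ ≤ x ^ (k + 1) * (x ^ ((k + 1) * n) * frameCount x k k) := by gcongr
      _ = x ^ ((k + 1) * (n + 1)) * frameCount x k k := by ring

end FrameCount

lemma ncard_mul_le_ncard_mul {α β R : Type*} [Semiring R] [PartialOrder R] [IsOrderedRing R]
    (r : α → β → Prop) {s : Set α} {t : Set β} {m n : R}
    (hm : ∀ a ∈ s, m ≤ {b ∈ t | r a b}.ncard) (hn : ∀ b ∈ t, ({a ∈ s | r a b}.ncard : R) ≤ n)
    (hs : s.Finite := by toFinite_tac) (ht : t.Finite := by toFinite_tac) :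
    s.ncard * m ≤ t.ncard * n := by
  classical
  lift s to Finset α using hs
  lift t to Finset β using ht
  simp only [mem_coe, ← coe_filter, Set.ncard_coe_finset] at hm hn ⊢
  simpa only [nsmul_eq_mul] using card_nsmul_le_card_nsmul r hm hn

section TotallyIsotropic

variable {f : V →ₗ[K] V →ₗ[K] K} {ℱ 𝒢 : Set (Submodule K V)} {T W X : Submodule K V} {m t : ℕ}

lemma TotallyIsotropic.mono (hW : TotallyIsotropic f W) (hTW : T ≤ W) :
    TotallyIsotropic f T :=
  fun x hx y hy ↦ hW x (hTW hx) y (hTW hy)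

lemma TotallyIsotropic.le_orthogonal (hW : TotallyIsotropic f W)
    (hTW : T ≤ W) : W ≤ LinearMap.BilinForm.orthogonal f T :=
  fun x hx n hn ↦ hW n (hTW hn) x hx

lemma inter_Ici_eq_empty_of_not_totallyIsotropic (hℱ : ∀ F ∈ ℱ, TotallyIsotropic f F)
    (hT : ¬ TotallyIsotropic f T) : ℱ ∩ Set.Ici T = ∅ :=
  Set.eq_empty_of_forall_notMem fun F hF ↦ hT ((hℱ F hF.1).mono hF.2)

lemma finrank_add_finrank_orthogonal_of_separatingLeft [FiniteDimensional K V]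
    (hf : f.SeparatingLeft) (T : Submodule K V) :
    finrank K T + finrank K (LinearMap.BilinForm.orthogonal f T) = finrank K V := by
  have ker_eq_bot : LinearMap.ker f = ⊥ :=
    LinearMap.separatingLeft_iff_ker_eq_bot.mp hf
  rw [LinearMap.BilinForm.finrank_add_finrank_orthogonal', ker_eq_bot, inf_bot_eq, finrank_bot,
    add_zero]

lemma subsingleton_polar_inter_Ici [FiniteDimensional K V] (hT : finrank K T = m) :
    (polar f m ∩ Set.Ici T).Subsingleton := by
  have eq_T {F : Submodule K V} (hF : F ∈ polar f m ∩ Set.Ici T) : T = F :=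
    Submodule.eq_of_le_of_finrank_eq hF.2 (hT.trans hF.1.2.symm)
  exact fun F hF G hG ↦ (eq_T hF).symm.trans (eq_T hG)

/-- Two families of subspaces are cross `t`-intersecting if each member of one meets each member of
the other in dimension at least `t`. -/
def CrossIntersecting (t : ℕ) (ℱ 𝒢 : Set (Submodule K V)) : Prop :=
  ∀ F ∈ ℱ, ∀ G ∈ 𝒢, t ≤ finrank K ↥(F ⊓ G)

lemma CrossIntersecting.symm (h : CrossIntersecting t ℱ 𝒢) : CrossIntersecting t 𝒢 ℱ :=
  fun G hG F hF ↦ inf_comm F G ▸ h F hF G hG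

lemma CrossIntersecting.isTCover (h : CrossIntersecting t ℱ 𝒢) {F : Submodule K V} (hF : F ∈ ℱ)
    (hFf : TotallyIsotropic f F) : IsTCover f t 𝒢 F :=
  ⟨hFf, h F hF⟩

lemma IsTCover.le_finrank [FiniteDimensional K V] (hX : IsTCover f t ℱ X) (hℱ : ℱ.Nonempty) :
    t ≤ finrank K X :=
  let ⟨F, hF⟩ := hℱ
  (hX.2 F hF).trans (Submodule.finrank_mono inf_le_left)

lemma IsTCover.tauCover_le (hX : IsTCover f t ℱ X) : tauCover f t ℱ ≤ finrank K X :=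
  Nat.sInf_le ⟨X, hX, rfl⟩

lemma IsTCover.exists_finrank_eq_tauCover (hX : IsTCover f t ℱ X) :
    ∃ Y, IsTCover f t ℱ Y ∧ finrank K Y = tauCover f t ℱ :=
  Nat.sInf_mem (s := {x | ∃ X, IsTCover f t ℱ X ∧ finrank K ↥X = x}) ⟨finrank K X, X, hX, rfl⟩

lemma exists_finrank_inf_lt_of_lt_tauCover (hT : TotallyIsotropic f T)
    (hlt : finrank K T < tauCover f t 𝒢) : ∃ G ∈ 𝒢, finrank K ↥(T ⊓ G) < t := by
  by_contra! h
  exact Nat.notMem_of_lt_sInf hlt ⟨T, ⟨hT, h⟩, rfl⟩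

end TotallyIsotropic

section Counting

local notation "q" => Nat.card K

variable [Finite V]

lemma ncard_coe_submodule (W : Submodule K V) : (W : Set V).ncard = q ^ finrank K W := by
  rw [← Nat.card_coe_set_eq]
  exact Module.natCard_eq_pow_finrank

lemma ncard_coe_submodule_diff (W T : Submodule K V) :
    (((W : Set V) \ T).ncard : ℚ) = (q : ℚ) ^ finrank K W - (q : ℚ) ^ finrank K ↥(T ⊓ W) := by
  have h := Set.ncard_inter_add_ncard_sdiff_eq_ncard (W : Set V) T
  rw [← Submodule.coe_inf, inf_comm, ncard_coe_submodule, ncard_coe_submodule] at h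
  rw [eq_sub_iff_add_eq']
  exact_mod_cast h

variable [Finite K]

variable (K) in
lemma two_le_natCard_cast : (2 : ℚ) ≤ q := mod_cast Finite.one_lt_card (α := K)

lemma ncard_linearIndependent_mem {k : ℕ} {W : Submodule K V} (hk : k ≤ finrank K W) :
    ({v : Fin k → V | LinearIndependent K v ∧ ∀ i, v i ∈ W}.ncard : ℚ) =
      frameCount (q : ℚ) (finrank K W) k := by
  have := Fintype.ofFinite K
  have := Fintype.ofFinite W
  have image_subtype : {v : Fin k → V | LinearIndependent K v ∧ ∀ i, v i ∈ W} =
      (W.subtype ∘ ·) '' {v : Fin k → W | LinearIndependent K v} := by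
    ext v
    constructor
    · rintro ⟨hv, hvW⟩
      exact ⟨fun i ↦ ⟨v i, hvW i⟩, hv.of_comp W.subtype, rfl⟩
    · rintro ⟨w, hw, rfl⟩
      exact ⟨hw.map' W.subtype W.ker_subtype, fun i ↦ (w i).2⟩
  rw [image_subtype, Set.ncard_image_of_injective _ W.injective_subtype.comp_left,
    ← Nat.card_coe_set_eq, Set.coe_ofPred, card_linearIndependent hk, ← Nat.card_eq_fintype_card,
    frameCount, ← Fin.prod_univ_eq_prod_range, Nat.cast_prod]
  refine prod_congr rfl fun i _ ↦ ?_
  rw [Nat.cast_sub (Nat.pow_le_pow_right Nat.card_pos (i.2.le.trans hk)), Nat.cast_pow,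
    Nat.cast_pow]

variable {ℱ 𝒢 : Set (Submodule K V)} {T X Y : Submodule K V} {f : V →ₗ[K] V →ₗ[K] K}
  {c m m₁ m₂ t ν : ℕ} {M : ℚ}

-- Both sides estimate the number of pairs `(F, x)` with `F ∈ ℱ`, `T ≤ F` and `x ∈ (F ⊓ Y) \ T`.
lemma ncard_inter_Ici_mul_le (hY : ∀ F ∈ ℱ, T ≤ F → t ≤ finrank K ↥(F ⊓ Y))
    (hM : ∀ x ∈ Y, x ∉ T → ((ℱ ∩ Set.Ici (T ⊔ K ∙ x)).ncard : ℚ) ≤ M) :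
    (ℱ ∩ Set.Ici T).ncard * ((q : ℚ) ^ t - (q : ℚ) ^ finrank K ↥(T ⊓ Y)) ≤
      ((q : ℚ) ^ finrank K Y - (q : ℚ) ^ finrank K ↥(T ⊓ Y)) * M := by
  rw [← ncard_coe_submodule_diff]
  refine ncard_mul_le_ncard_mul (fun F x ↦ x ∈ F) ?_ ?_
  · rintro F ⟨hF, hTF : T ≤ F⟩
    have vectors : {x ∈ (Y : Set V) \ T | x ∈ F} = ((F ⊓ Y : Submodule K V) : Set V) \ T := by
      ext x
      simp only [Set.mem_ofPred_eq, Set.mem_sdiff, SetLike.mem_coe, Submodule.mem_inf]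
      tauto
    rw [vectors, ncard_coe_submodule_diff, ← inf_assoc, inf_eq_left.mpr hTF]
    gcongr
    · linarith [two_le_natCard_cast K]
    · exact hY F hF hTF
  · rintro x ⟨hxY, hxT⟩
    have extensions : {F ∈ ℱ ∩ Set.Ici T | x ∈ F} = ℱ ∩ Set.Ici (T ⊔ K ∙ x) := by
      ext F
      simp only [Set.mem_ofPred_eq, Set.mem_inter_iff, Set.mem_Ici, sup_le_iff,
        Submodule.span_singleton_le_iff_mem, and_assoc]
    rw [extensions]
    exact hM x hxY hxT

lemma ncard_inter_Ici_le_pow_mul (hM₀ : 0 ≤ M) (hTY : finrank K ↥(T ⊓ Y) < t)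
    (hc : finrank K Y + 1 ≤ c + t) (hY : ∀ F ∈ ℱ, T ≤ F → t ≤ finrank K ↥(F ⊓ Y))
    (hM : ∀ x ∈ Y, x ∉ T → ((ℱ ∩ Set.Ici (T ⊔ K ∙ x)).ncard : ℚ) ≤ M) :
    ((ℱ ∩ Set.Ici T).ncard : ℚ) ≤ (q : ℚ) ^ c * M := by
  have two_le_q := two_le_natCard_cast K
  have pow_sub_pow_pos : 0 < (q : ℚ) ^ t - (q : ℚ) ^ finrank K ↥(T ⊓ Y) :=
    sub_pos.mpr (pow_lt_pow_right₀ (by linarith) hTY)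
  refine le_of_mul_le_mul_right ?_ pow_sub_pow_pos
  calc (ℱ ∩ Set.Ici T).ncard * ((q : ℚ) ^ t - (q : ℚ) ^ finrank K ↥(T ⊓ Y))
      ≤ ((q : ℚ) ^ finrank K Y - (q : ℚ) ^ finrank K ↥(T ⊓ Y)) * M := ncard_inter_Ici_mul_le hY hM
    _ ≤ (q : ℚ) ^ finrank K Y * M := by
        gcongr
        exact sub_le_self _ (by positivity)
    _ ≤ (q : ℚ) ^ c * ((q : ℚ) ^ t - (q : ℚ) ^ finrank K ↥(T ⊓ Y)) * M := by
        gcongr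
        exact pow_le_pow_mul_pow_sub_pow two_le_q hTY hc
    _ = (q : ℚ) ^ c * M * ((q : ℚ) ^ t - (q : ℚ) ^ finrank K ↥(T ⊓ Y)) := by ring

-- Both sides estimate the number of pairs `(F, v)` with `F ∈ ℱ` and `v` a linearly independent
-- `t`-tuple in `F ⊓ X`.
lemma ncard_mul_frameCount_le (htX : t ≤ finrank K X) (hX : ∀ F ∈ ℱ, t ≤ finrank K ↥(X ⊓ F))
    (hM : ∀ T : Submodule K V, finrank K T = t → ((ℱ ∩ Set.Ici T).ncard : ℚ) ≤ M) :
    ℱ.ncard * frameCount (q : ℚ) t t ≤ frameCount (q : ℚ) (finrank K X) t * M := by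
  rw [← ncard_linearIndependent_mem htX]
  refine ncard_mul_le_ncard_mul (fun F v ↦ ∀ i, v i ∈ F) ?_ ?_
  · intro F hF
    have tuples : {v ∈ {v : Fin t → V | LinearIndependent K v ∧ ∀ i, v i ∈ X} | ∀ i, v i ∈ F} =
        {v | LinearIndependent K v ∧ ∀ i, v i ∈ X ⊓ F} := by
      ext v
      simp [and_assoc, forall_and]
    have one_le_q : (1 : ℚ) ≤ q := by linarith [two_le_natCard_cast K]
    rw [tuples, ncard_linearIndependent_mem (hX F hF)]
    refine prod_le_prod (fun i hi ↦ ?_) fun i _ ↦ ?_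
    · exact sub_nonneg.mpr (pow_le_pow_right₀ one_le_q (mem_range.mp hi).le)
    · exact sub_le_sub_right (pow_le_pow_right₀ one_le_q (hX F hF)) _
  · rintro v ⟨hv, -⟩
    have above_span : {F ∈ ℱ | ∀ i, v i ∈ F} =
        ℱ ∩ Set.Ici (Submodule.span K (Set.range v)) := by
      ext F
      simp [Submodule.span_le, Set.range_subset_iff]
    rw [above_span]
    exact hM _ ((finrank_span_eq_card hv).trans (Fintype.card_fin t))

lemma pow_mul_ncard_le (htX : t ≤ finrank K X) (hX : ∀ F ∈ ℱ, t ≤ finrank K ↥(X ⊓ F))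
    (hM₀ : 0 ≤ M)
    (hM : ∀ T : Submodule K V, finrank K T = t → ((ℱ ∩ Set.Ici T).ncard : ℚ) ≤ M) :
    (q : ℚ) ^ ((t + 1) * t) * ℱ.ncard ≤ (q : ℚ) ^ ((t + 1) * finrank K X) * M := by
  have two_le_q := two_le_natCard_cast K
  have frameCount_tt_pos : 0 < frameCount (q : ℚ) t t := frameCount_pos (by linarith) le_rfl
  refine le_of_mul_le_mul_right ?_ frameCount_tt_pos
  calc (q : ℚ) ^ ((t + 1) * t) * ℱ.ncard * frameCount (q : ℚ) t t
      = (q : ℚ) ^ ((t + 1) * t) * (ℱ.ncard * frameCount (q : ℚ) t t) := mul_assoc _ _ _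
    _ ≤ (q : ℚ) ^ ((t + 1) * t) * (frameCount (q : ℚ) (finrank K X) t * M) :=
        mul_le_mul_of_nonneg_left (ncard_mul_frameCount_le htX hX hM) (by positivity)
    _ = (q : ℚ) ^ ((t + 1) * t) * frameCount (q : ℚ) (finrank K X) t * M :=
        (mul_assoc _ _ _).symm
    _ ≤ (q : ℚ) ^ ((t + 1) * finrank K X) * frameCount (q : ℚ) t t * M :=
        mul_le_mul_of_nonneg_right (pow_mul_frameCount_le two_le_q htX) hM₀
    _ = (q : ℚ) ^ ((t + 1) * finrank K X) * M * frameCount (q : ℚ) t t := mul_right_comm _ _ _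

lemma ncard_polar_inter_Ici_mul_le (hf : f.SeparatingLeft) (hT : TotallyIsotropic f T)
    (hM : ∀ x ∉ T, ((polar f m ∩ Set.Ici (T ⊔ K ∙ x)).ncard : ℚ) ≤ M) :
    (polar f m ∩ Set.Ici T).ncard * ((q : ℚ) ^ m - (q : ℚ) ^ finrank K T) ≤
      ((q : ℚ) ^ (finrank K V - finrank K T) - (q : ℚ) ^ finrank K T) * M := by
  have dimension := finrank_add_finrank_orthogonal_of_separatingLeft hf T
  have key := ncard_inter_Ici_mul_le (ℱ := polar f m) (T := T) (t := m)
    (Y := LinearMap.BilinForm.orthogonal f T)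
    (fun F hF hTF ↦ by rw [inf_eq_left.mpr (hF.1.le_orthogonal hTF), hF.2]) fun x _ hx ↦ hM x hx
  rwa [inf_eq_left.mpr (hT.le_orthogonal le_rfl), Nat.eq_sub_of_add_eq' dimension] at key

lemma ncard_polar_inter_Ici_le_Nprime (hf : f.SeparatingLeft) (hV : finrank K V = 2 * ν)
    (hmν : m ≤ ν) (hT : finrank K T ≤ m) :
    ((polar f m ∩ Set.Ici T).ncard : ℚ) ≤ Nprime q (finrank K T) m ν := by
  induction hk : m - finrank K T generalizing T with
  | zero =>
    have finrank_eq : finrank K T = m := by lia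
    rw [finrank_eq, Nprime_self]
    exact_mod_cast Set.ncard_le_one_iff_subsingleton.mpr (subsingleton_polar_inter_Ici finrank_eq)
  | succ k ih =>
    by_cases hTf : TotallyIsotropic f T
    swap
    · rw [inter_Ici_eq_empty_of_not_totallyIsotropic (fun F hF ↦ hF.1) hTf, Set.ncard_empty,
        Nat.cast_zero]
      exact Nprime_nonneg Nat.card_pos hmν
    set a := finrank K T
    have key := ncard_polar_inter_Ici_mul_le (m := m) (M := Nprime q (a + 1) m ν) hf hTf
      fun x hx ↦ by
        have finrank_sup := Submodule.finrank_sup_span_singleton hx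
        rw [← finrank_sup]
        exact ih (by lia) (by lia)
    have one_lt_q : (1 : ℚ) < q := by linarith [two_le_natCard_cast K]
    have one_lt_pow : 1 < (q : ℚ) ^ (m - a) := one_lt_pow₀ one_lt_q (by lia)
    have factor_pos : 0 < (q : ℚ) ^ a * ((q : ℚ) ^ (m - a) - 1) :=
      mul_pos (by positivity) (sub_pos.mpr one_lt_pow)
    refine le_of_mul_le_mul_right ?_ factor_pos
    calc (polar f m ∩ Set.Ici T).ncard * ((q : ℚ) ^ a * ((q : ℚ) ^ (m - a) - 1))
        = (polar f m ∩ Set.Ici T).ncard * ((q : ℚ) ^ m - (q : ℚ) ^ a) := by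
          rw [mul_sub_one, ← pow_add, Nat.add_sub_cancel' hT]
      _ ≤ ((q : ℚ) ^ (finrank K V - a) - (q : ℚ) ^ a) * Nprime q (a + 1) m ν := key
      _ = (q : ℚ) ^ a * (Nprime q (a + 1) m ν * ((q : ℚ) ^ (2 * (ν - a)) - 1)) := by
          rw [hV, show 2 * ν - a = a + 2 * (ν - a) by lia, pow_add]
          ring
      _ = Nprime q a m ν * ((q : ℚ) ^ a * ((q : ℚ) ^ (m - a) - 1)) := by
          rw [← Nprime_mul_pow_sub_one Finite.one_lt_card (by lia) (by lia)]
          ring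

lemma pow_mul_ncard_inter_Ici_le (hM₀ : 0 ≤ M) (hℱ : ∀ F ∈ ℱ, TotallyIsotropic f F)
    (hc : ∀ G ∈ 𝒢, finrank K G + 1 ≤ c + t) (hcross : CrossIntersecting t ℱ 𝒢)
    (hM : ∀ T : Submodule K V, finrank K T = tauCover f t 𝒢 → ((ℱ ∩ Set.Ici T).ncard : ℚ) ≤ M)
    (hT : finrank K T ≤ tauCover f t 𝒢) :
    (q : ℚ) ^ (c * finrank K T) * (ℱ ∩ Set.Ici T).ncard ≤ (q : ℚ) ^ (c * tauCover f t 𝒢) * M := by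
  induction hk : tauCover f t 𝒢 - finrank K T generalizing T with
  | zero =>
    have finrank_eq : finrank K T = tauCover f t 𝒢 := by lia
    rw [finrank_eq]
    gcongr
    exact hM T finrank_eq
  | succ k ih =>
    by_cases hTf : TotallyIsotropic f T
    swap
    · rw [inter_Ici_eq_empty_of_not_totallyIsotropic hℱ hTf, Set.ncard_empty]
      simpa using by positivity
    obtain ⟨G, hG, hTG⟩ := exists_finrank_inf_lt_of_lt_tauCover hTf (by lia : _ < tauCover f t 𝒢)
    have q_pos : (0 : ℚ) < q := by linarith [two_le_natCard_cast K]
    have extension_le (x : V) (hx : x ∉ T) : ((ℱ ∩ Set.Ici (T ⊔ K ∙ x)).ncard : ℚ) ≤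
        (q : ℚ) ^ (c * tauCover f t 𝒢) * M / (q : ℚ) ^ (c * (finrank K T + 1)) := by
      have finrank_sup := Submodule.finrank_sup_span_singleton hx
      rw [le_div_iff₀' (by positivity), ← finrank_sup]
      exact ih (by lia) (by lia)
    have step := ncard_inter_Ici_le_pow_mul (by positivity) hTG (hc G hG)
      (fun F hF _ ↦ hcross F hF G hG) fun x _ hx ↦ extension_le x hx
    calc (q : ℚ) ^ (c * finrank K T) * (ℱ ∩ Set.Ici T).ncard
        ≤ (q : ℚ) ^ (c * finrank K T) * ((q : ℚ) ^ c *
            ((q : ℚ) ^ (c * tauCover f t 𝒢) * M / (q : ℚ) ^ (c * (finrank K T + 1)))) := by gcongr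
      _ = (q : ℚ) ^ (c * tauCover f t 𝒢) * M := by
          field_simp
          ring

lemma pow_tauCover_mul_ncard_inter_Ici_le (hf : f.SeparatingLeft) (hV : finrank K V = 2 * ν)
    (hdim : 2 * m₁ + m₂ + 1 ≤ 2 * ν) (hℱ : ℱ ⊆ polar f m₁) (h𝒢 : 𝒢 ⊆ polar f m₂)
    (hcross : CrossIntersecting t ℱ 𝒢) (htm₂ : t ≤ m₂) (htτ : t ≤ tauCover f t 𝒢)
    (hτm₁ : tauCover f t 𝒢 ≤ m₁) (hT : finrank K T = t) :
    (q : ℚ) ^ ((t + 1) * tauCover f t 𝒢) * (ℱ ∩ Set.Ici T).ncard ≤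
      (q : ℚ) ^ ((t + 1) * t) * Nprime q t m₁ ν := by
  set τ := tauCover f t 𝒢
  obtain ⟨c, hc⟩ : ∃ c, m₂ + 1 = c + t := ⟨m₂ + 1 - t, by lia⟩
  have above_le (S : Submodule K V) (hS : finrank K S = τ) :
      ((ℱ ∩ Set.Ici S).ncard : ℚ) ≤ Nprime q τ m₁ ν :=
    calc ((ℱ ∩ Set.Ici S).ncard : ℚ) ≤ (polar f m₁ ∩ Set.Ici S).ncard :=
          mod_cast Set.ncard_le_ncard (Set.inter_subset_inter_left _ hℱ)
      _ ≤ Nprime q τ m₁ ν :=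
          hS ▸ ncard_polar_inter_Ici_le_Nprime hf hV (by lia) (hS.trans_le hτm₁)
  have climb : (q : ℚ) ^ (c * t) * (ℱ ∩ Set.Ici T).ncard ≤ (q : ℚ) ^ (c * τ) * Nprime q τ m₁ ν :=
    hT ▸ pow_mul_ncard_inter_Ici_le (Nprime_nonneg Nat.card_pos (by lia)) (fun F hF ↦ (hℱ hF).1)
      (fun G hG ↦ by rw [(h𝒢 hG).2, hc]) hcross above_le (hT.trans_le htτ)
  have descend : (q : ℚ) ^ ((m₂ + 2) * τ) * Nprime q τ m₁ ν ≤
      (q : ℚ) ^ ((m₂ + 2) * t) * Nprime q t m₁ ν :=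
    antitoneOn_pow_mul_Nprime Finite.one_lt_card (by lia) (htτ.trans hτm₁) hτm₁ htτ
  have q_pos : (0 : ℚ) < q := by linarith [two_le_natCard_cast K]
  refine le_of_mul_le_mul_left ?_ (pow_pos q_pos (c * t))
  calc (q : ℚ) ^ (c * t) * ((q : ℚ) ^ ((t + 1) * τ) * (ℱ ∩ Set.Ici T).ncard)
      = (q : ℚ) ^ ((t + 1) * τ) * ((q : ℚ) ^ (c * t) * (ℱ ∩ Set.Ici T).ncard) := by ring
    _ ≤ (q : ℚ) ^ ((t + 1) * τ) * ((q : ℚ) ^ (c * τ) * Nprime q τ m₁ ν) := by gcongr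
    _ = (q : ℚ) ^ ((m₂ + 2) * τ) * Nprime q τ m₁ ν := by
        rw [show m₂ + 2 = c + (t + 1) by lia]
        ring
    _ ≤ (q : ℚ) ^ ((m₂ + 2) * t) * Nprime q t m₁ ν := descend
    _ = (q : ℚ) ^ (c * t) * ((q : ℚ) ^ ((t + 1) * t) * Nprime q t m₁ ν) := by
        rw [show m₂ + 2 = c + (t + 1) by lia]
        ring

lemma pow_tauCover_mul_ncard_le (hf : f.SeparatingLeft) (hV : finrank K V = 2 * ν)
    (hdim : 2 * m₁ + m₂ + 1 ≤ 2 * ν) (hℱ : ℱ ⊆ polar f m₁) (h𝒢 : 𝒢 ⊆ polar f m₂)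
    (hcross : CrossIntersecting t ℱ 𝒢) (hℱ₀ : ℱ.Nonempty) (h𝒢₀ : 𝒢.Nonempty) :
    (q : ℚ) ^ ((t + 1) * tauCover f t 𝒢) * ℱ.ncard ≤
      (q : ℚ) ^ ((t + 1) * tauCover f t ℱ) * Nprime q t m₁ ν := by
  obtain ⟨F, hF⟩ := hℱ₀
  obtain ⟨G, hG⟩ := h𝒢₀
  have F_cover : IsTCover f t 𝒢 F := hcross.isTCover hF (hℱ hF).1
  have G_cover : IsTCover f t ℱ G := hcross.symm.isTCover hG (h𝒢 hG).1
  obtain ⟨X, hX, finrank_X⟩ := G_cover.exists_finrank_eq_tauCover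
  obtain ⟨Y, hY, finrank_Y⟩ := F_cover.exists_finrank_eq_tauCover
  have t_le_m₂ : t ≤ m₂ := (h𝒢 hG).2 ▸ G_cover.le_finrank ⟨F, hF⟩
  have t_le_τ : t ≤ tauCover f t 𝒢 := finrank_Y ▸ hY.le_finrank ⟨G, hG⟩
  have τ_le_m₁ : tauCover f t 𝒢 ≤ m₁ := (hℱ hF).2 ▸ F_cover.tauCover_le
  have q_pos : (0 : ℚ) < q := by linarith [two_le_natCard_cast K]
  have N_nonneg : 0 ≤ Nprime q t m₁ ν := Nprime_nonneg Nat.card_pos (by lia)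
  have key := pow_mul_ncard_le
    (M := (q : ℚ) ^ ((t + 1) * t) * Nprime q t m₁ ν / (q : ℚ) ^ ((t + 1) * tauCover f t 𝒢))
    (hX.le_finrank ⟨F, hF⟩) hX.2 (by positivity) fun T hT ↦ by
      rw [le_div_iff₀' (by positivity)]
      exact pow_tauCover_mul_ncard_inter_Ici_le hf hV hdim hℱ h𝒢 hcross t_le_m₂ t_le_τ τ_le_m₁ hT
  rw [finrank_X, ← mul_div_assoc, le_div_iff₀ (by positivity)] at key
  refine le_of_mul_le_mul_left ?_ (pow_pos q_pos ((t + 1) * t))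
  linarith

end Counting

theorem stmt_0_general [Finite K] [Finite V] {f : V →ₗ[K] V →ₗ[K] K} (hf : f.SeparatingLeft)
    {ν m₁ m₂ t : ℕ} (hV : finrank K V = 2 * ν) (hdim₁ : 2 * m₁ + m₂ + 1 ≤ 2 * ν)
    (hdim₂ : 2 * m₂ + m₁ + 1 ≤ 2 * ν) {ℱ₁ ℱ₂ : Set (Submodule K V)} (h₁ : ℱ₁ ⊆ polar f m₁)
    (h₂ : ℱ₂ ⊆ polar f m₂) (hcross : CrossIntersecting t ℱ₁ ℱ₂) :
    (ℱ₁.ncard : ℚ) * ℱ₂.ncard ≤ Nprime (Nat.card K) t m₁ ν * Nprime (Nat.card K) t m₂ ν := by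
  have N₁_nonneg : 0 ≤ Nprime (Nat.card K) t m₁ ν := Nprime_nonneg Nat.card_pos (by lia)
  have N₂_nonneg : 0 ≤ Nprime (Nat.card K) t m₂ ν := Nprime_nonneg Nat.card_pos (by lia)
  rcases ℱ₁.eq_empty_or_nonempty with rfl | hℱ₁
  · simpa using mul_nonneg N₁_nonneg N₂_nonneg
  rcases ℱ₂.eq_empty_or_nonempty with rfl | hℱ₂
  · simpa using mul_nonneg N₁_nonneg N₂_nonneg
  have bound₁ := pow_tauCover_mul_ncard_le hf hV hdim₁ h₁ h₂ hcross hℱ₁ hℱ₂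
  have bound₂ := pow_tauCover_mul_ncard_le hf hV hdim₂ h₂ h₁ hcross.symm hℱ₂ hℱ₁
  have q_pos : (0 : ℚ) < Nat.card K := mod_cast Nat.card_pos
  set x₁ := (Nat.card K : ℚ) ^ ((t + 1) * tauCover f t ℱ₁)
  set x₂ := (Nat.card K : ℚ) ^ ((t + 1) * tauCover f t ℱ₂)
  refine le_of_mul_le_mul_left ?_ (by positivity : 0 < x₂ * x₁)
  calc x₂ * x₁ * (ℱ₁.ncard * ℱ₂.ncard) = x₂ * ℱ₁.ncard * (x₁ * ℱ₂.ncard) := by ring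
    _ ≤ x₁ * Nprime (Nat.card K) t m₁ ν * (x₂ * Nprime (Nat.card K) t m₂ ν) := by gcongr
    _ = x₂ * x₁ * (Nprime (Nat.card K) t m₁ ν * Nprime (Nat.card K) t m₂ ν) := by ring

theorem stmt_0
    (q ν m₁ m₂ t : ℕ) (hq : IsPrimePow q)
    {K : Type} [Field K] [Fintype K] (hK : Fintype.card K = q)
    (f : (Fin (2 * ν) → K) →ₗ[K] (Fin (2 * ν) → K) →ₗ[K] K)
    (halt : ∀ x, f x x = 0)
    (hnd : ∀ x, (∀ y, f x y = 0) → x = 0)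
    (hν : 0 < ν) (hm₂ : 0 < m₂) (ht : 0 < t)
    (hm : m₂ ≤ m₁) (hmt : t ≤ m₂) (hdim : 2 * m₁ + m₂ + 1 ≤ 2 * ν)
    (ℱ₁ ℱ₂ : Set (Submodule K (Fin (2 * ν) → K)))
    (h1 : ℱ₁ ⊆ polar f m₁) (h2 : ℱ₂ ⊆ polar f m₂)
    (hcross : ∀ F₁ ∈ ℱ₁, ∀ F₂ ∈ ℱ₂, t ≤ finrank K ↥(F₁ ⊓ F₂)) :
    (ℱ₁.ncard : ℚ) * ℱ₂.ncard ≤ Nprime q t m₁ ν * Nprime q t m₂ ν := by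
  rw [← hK, ← Nat.card_eq_fintype_card]
  exact stmt_0_general hnd (by simp) hdim (by lia) h1 h2 hcross

end
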